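/- If 1 − (d−1)ν − (K−1)dμ_B > 0, then A_nz has linearly independent columns and the induced mixed norm satisfies ‖A_z^T (A_nz^†)^T‖_{2,∞} ≤ Kdμ_B / (1 − (d−1)ν − (K−1)dμ_B). -/

import Mathlib

/- Setting: a measurement matrix `A ∈ ℝ^{m×n}` with `n = L·d`, partitioned into `L` column
blocks of size `m×d`; columns are indexed by pairs `(l, j)` (block `l`, position `j`). -/

noncomputable section

open Finset Matrix

/-- Euclidean (ℓ₂) norm of a finitely indexed real vector. -/
def e2norm {ι : Type*} [Fintype ι] (v : ι → ℝ) : ℝ := Real.sqrt (∑ i, v i ^ 2)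

/-- Euclidean inner (dot) product of two real vectors. -/
def dotp {ι : Type*} [Fintype ι] (u v : ι → ℝ) : ℝ := ∑ i, u i * v i

/-- The `(l, j)` column of the block matrix `A` (block `l`, position `j` inside the block). -/
def acol {m L d : ℕ} (A : Matrix (Fin m) (Fin L × Fin d) ℝ) (l : Fin L) (j : Fin d) :
    Fin m → ℝ :=
  fun i => A i (l, j)

/-- `A_lᵀ v` : correlation of the `l`-th block of `A` with a vector `v ∈ ℝ^m`. -/
def blkT {m L d : ℕ} (A : Matrix (Fin m) (Fin L × Fin d) ℝ) (l : Fin L) (v : Fin m → ℝ) :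
    Fin d → ℝ :=
  fun j => dotp (acol A l j) v

/-- Spectral norm (largest singular value) `ρ(X)` of a real matrix, as the supremum of
`‖Xu‖₂ / ‖u‖₂` over nonzero `u`. -/
def specNorm {p q : ℕ} (X : Matrix (Fin p) (Fin q) ℝ) : ℝ :=
  ⨆ u : {u : Fin q → ℝ // u ≠ 0}, e2norm (X *ᵥ u.1) / e2norm u.1

/-- The `d × d` cross-Gram matrix `A_iᵀ A_j` of two blocks of `A`. -/
def bgram {m L d : ℕ} (A : Matrix (Fin m) (Fin L × Fin d) ℝ) (i j : Fin L) :
    Matrix (Fin d) (Fin d) ℝ :=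
  fun a b => dotp (acol A i a) (acol A j b)

/-- Block-coherence `μ_B = max_{i ≠ j} (1/d) ρ(A_iᵀ A_j)`. -/
def blockCoh {m L d : ℕ} (A : Matrix (Fin m) (Fin L × Fin d) ℝ) : ℝ :=
  ⨆ p : {p : Fin L × Fin L // p.1 ≠ p.2},
    (1 / (d : ℝ)) * specNorm (bgram A p.1.1 p.1.2)

/-- Sub-coherence `ν`: the maximum of `|a_iᵀ a_j|` over pairs of distinct columns lying in the
same block of `A`. -/
def subCoh {m L d : ℕ} (A : Matrix (Fin m) (Fin L × Fin d) ℝ) : ℝ :=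
  ⨆ t : {t : Fin L × Fin d × Fin d // t.2.1 ≠ t.2.2},
    |dotp (acol A t.1.1 t.1.2.1) (acol A t.1.1 t.1.2.2)|

/-- Mixed `ℓ₂/ℓ∞` norm (block size `d`) of a block-partitioned vector. -/
def bnorm2inf {σ : Type*} [Fintype σ] {d : ℕ} (z : σ × Fin d → ℝ) : ℝ :=
  ⨆ q : σ, e2norm (fun j => z (q, j))

/-- Induced mixed `ℓ₂/ℓ∞` matrix norm (block size `d`). -/
def bOpNorm {σ τ : Type*} [Fintype σ] [Fintype τ] {d : ℕ}
    (X : Matrix (σ × Fin d) (τ × Fin d) ℝ) : ℝ :=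
  ⨆ z : {z : τ × Fin d → ℝ // z ≠ 0}, bnorm2inf (X *ᵥ z.1) / bnorm2inf z.1

/-- `A_nz`: the concatenation of the blocks of `A` indexed by `I1`. -/
def Anz {m L d : ℕ} (A : Matrix (Fin m) (Fin L × Fin d) ℝ) (I1 : Finset (Fin L)) :
    Matrix (Fin m) ({l : Fin L // l ∈ I1} × Fin d) ℝ :=
  fun i c => A i (c.1.1, c.2)

/-- `A_z`: the concatenation of the blocks of `A` not indexed by `I1`. -/
def Az {m L d : ℕ} (A : Matrix (Fin m) (Fin L × Fin d) ℝ) (I1 : Finset (Fin L)) :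
    Matrix (Fin m) ({l : Fin L // l ∉ I1} × Fin d) ℝ :=
  fun i c => A i (c.1.1, c.2)

/-- Moore–Penrose pseudoinverse `X† = (XᵀX)⁻¹ Xᵀ` of a matrix with linearly independent
columns (for such matrices this closed form is the Moore–Penrose pseudoinverse). -/
def pinvc {m : ℕ} {ι : Type*} [Fintype ι] [DecidableEq ι]
    (X : Matrix (Fin m) ι ℝ) : Matrix ι (Fin m) ℝ :=
  (Xᵀ * X)⁻¹ * Xᵀ

lemma e2norm_eq {ι : Type*} [Fintype ι] (v : ι → ℝ) : e2norm v = ‖WithLp.toLp 2 v‖ := by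
  simp [e2norm, EuclideanSpace.norm_eq]

lemma e2norm_nonneg {ι : Type*} [Fintype ι] (v : ι → ℝ) : 0 ≤ e2norm v := Real.sqrt_nonneg _

lemma e2norm_sq {ι : Type*} [Fintype ι] (v : ι → ℝ) : e2norm v ^ 2 = ∑ i, v i ^ 2 :=
  Real.sq_sqrt (Finset.sum_nonneg fun _ _ => sq_nonneg _)

lemma e2norm_pos {ι : Type*} [Fintype ι] {v : ι → ℝ} (h : v ≠ 0) : 0 < e2norm v := by
  rw [e2norm_eq, norm_pos_iff]
  intro h0
  apply h
  funext i
  exact congrFun (congrArg WithLp.ofLp h0) i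

lemma e2norm_zero {ι : Type*} [Fintype ι] : e2norm (0 : ι → ℝ) = 0 := by
  simp [e2norm]

lemma e2norm_sum_le {ι κ : Type*} [Fintype ι] (s : Finset κ) (f : κ → ι → ℝ) :
    e2norm (∑ r ∈ s, f r) ≤ ∑ r ∈ s, e2norm (f r) := by
  simp only [e2norm_eq, WithLp.toLp_sum]
  exact norm_sum_le _ _

lemma e2norm_le_add {ι : Type*} [Fintype ι] (u v w : ι → ℝ) (h : u + v = w) :
    e2norm u ≤ e2norm w + e2norm v := by
  subst h
  simp only [e2norm_eq, WithLp.toLp_add]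
  have := norm_sub_le (WithLp.toLp 2 u + WithLp.toLp 2 v) (WithLp.toLp 2 v)
  simpa using this

lemma e2norm_mulVec_le {p q : ℕ} (X : Matrix (Fin p) (Fin q) ℝ) :
    ∃ C : ℝ, 0 ≤ C ∧ ∀ u, e2norm (X *ᵥ u) ≤ C * e2norm u := by
  refine ⟨‖LinearMap.toContinuousLinearMap (Matrix.toEuclideanLin X)‖, norm_nonneg _, fun u => ?_⟩
  have := (LinearMap.toContinuousLinearMap (Matrix.toEuclideanLin X)).le_opNorm (WithLp.toLp 2 u)
  rw [e2norm_eq, e2norm_eq]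
  exact this

lemma specNorm_nonneg {p q : ℕ} (X : Matrix (Fin p) (Fin q) ℝ) : 0 ≤ specNorm X :=
  Real.iSup_nonneg fun _ => div_nonneg (e2norm_nonneg _) (e2norm_nonneg _)

lemma specNorm_bound {p q : ℕ} (X : Matrix (Fin p) (Fin q) ℝ) (u : Fin q → ℝ) :
    e2norm (X *ᵥ u) ≤ specNorm X * e2norm u := by
  by_cases hu : u = 0
  · subst hu
    simp [e2norm_zero]
  · rw [← div_le_iff₀ (e2norm_pos hu)]
    obtain ⟨C, hC, hX⟩ := e2norm_mulVec_le X
    refine le_ciSup (f := fun u : {u : Fin q → ℝ // u ≠ 0} => e2norm (X *ᵥ u.1) / e2norm u.1)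
      ⟨C, ?_⟩ ⟨u, hu⟩
    rintro _ ⟨v, rfl⟩
    exact (div_le_iff₀ (e2norm_pos v.2)).2 (hX _)

lemma blockCoh_nonneg {m L d : ℕ} (A : Matrix (Fin m) (Fin L × Fin d) ℝ) : 0 ≤ blockCoh A :=
  Real.iSup_nonneg fun _ => mul_nonneg (by positivity) (specNorm_nonneg _)

lemma subCoh_nonneg {m L d : ℕ} (A : Matrix (Fin m) (Fin L × Fin d) ℝ) : 0 ≤ subCoh A :=
  Real.iSup_nonneg fun _ => abs_nonneg _

lemma bgram_off {m L d : ℕ} (hd : 0 < d) (A : Matrix (Fin m) (Fin L × Fin d) ℝ) {i j : Fin L}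
    (hij : i ≠ j) (u : Fin d → ℝ) :
    e2norm (bgram A i j *ᵥ u) ≤ d * blockCoh A * e2norm u := by
  refine (specNorm_bound _ _).trans (mul_le_mul_of_nonneg_right ?_ (e2norm_nonneg _))
  have h := le_ciSup (f := fun p : {p : Fin L × Fin L // p.1 ≠ p.2} =>
    (1 / (d : ℝ)) * specNorm (bgram A p.1.1 p.1.2)) (Set.finite_range _).bddAbove ⟨(i, j), hij⟩
  have hd' : (0 : ℝ) < d := by exact_mod_cast hd
  have h2 := mul_le_mul_of_nonneg_left h hd'.le
  simp only [← mul_assoc, mul_one_div_cancel hd'.ne', one_mul] at h2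
  exact h2

lemma subCoh_le {m L d : ℕ} (A : Matrix (Fin m) (Fin L × Fin d) ℝ) (l : Fin L) {a b : Fin d}
    (hab : a ≠ b) : |bgram A l l a b| ≤ subCoh A :=
  le_ciSup (f := fun t : {t : Fin L × Fin d × Fin d // t.2.1 ≠ t.2.2} =>
    |dotp (acol A t.1.1 t.1.2.1) (acol A t.1.1 t.1.2.2)|) (Set.finite_range _).bddAbove
    ⟨(l, a, b), hab⟩

lemma bgram_diag {m L d : ℕ} (A : Matrix (Fin m) (Fin L × Fin d) ℝ)
    (hA : ∀ l j, e2norm (acol A l j) = 1) (l : Fin L) (a : Fin d) : bgram A l l a a = 1 := by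
  have h := e2norm_sq (acol A l a)
  rw [hA] at h
  simp only [bgram, dotp, ← sq]
  linarith

lemma bgram_self {m L d : ℕ} (hd : 0 < d) (A : Matrix (Fin m) (Fin L × Fin d) ℝ)
    (hA : ∀ l j, e2norm (acol A l j) = 1) (l : Fin L) (u : Fin d → ℝ) :
    (1 - ((d : ℝ) - 1) * subCoh A) * e2norm u ≤ e2norm (bgram A l l *ᵥ u) := by
  set ν := subCoh A with hν
  have hν0 : 0 ≤ ν := subCoh_nonneg A
  have hd1 : (0 : ℝ) ≤ (d : ℝ) - 1 := by
    have : (1 : ℝ) ≤ d := by exact_mod_cast hd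
    linarith
  let E : Fin d → ℝ := fun a => -∑ b ∈ univ.erase a, bgram A l l a b * u b
  have hE : bgram A l l *ᵥ u + E = u := by
    funext a
    simp only [Pi.add_apply, E, Matrix.mulVec, dotProduct]
    rw [← Finset.add_sum_erase univ _ (Finset.mem_univ a), bgram_diag A hA]
    ring
  have hE' : u + -E = bgram A l l *ᵥ u := by rw [← sub_eq_add_neg]; exact (eq_sub_of_add_eq hE).symm
  have h1 := e2norm_le_add _ _ _ hE'
  have h2 : e2norm (-E) ≤ ((d : ℝ) - 1) * ν * e2norm u := by
    refine abs_le_of_sq_le_sq' ?_ (by have := e2norm_nonneg u; positivity) |>.2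
    rw [mul_pow, e2norm_sq, e2norm_sq]
    have key : ∀ a, (-E) a ^ 2 ≤ ν ^ 2 * (((d : ℝ) - 1) * ((∑ b, u b ^ 2) - u a ^ 2)) := by
      intro a
      have hc : ((univ.erase a).card : ℝ) = (d : ℝ) - 1 := by
        rw [Finset.card_erase_of_mem (Finset.mem_univ a), Finset.card_univ, Fintype.card_fin,
          Nat.cast_sub hd]
        simp
      have hs : ∑ b ∈ univ.erase a, u b ^ 2 = (∑ b, u b ^ 2) - u a ^ 2 := by
        rw [← Finset.add_sum_erase univ _ (Finset.mem_univ a)]; ring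
      have hcs := sq_sum_le_card_mul_sum_sq (s := univ.erase a)
        (f := fun b => bgram A l l a b * u b)
      simp only [Pi.neg_apply, E, neg_neg]
      refine hcs.trans ?_
      rw [hc, ← hs]
      have : ∑ b ∈ univ.erase a, (bgram A l l a b * u b) ^ 2
          ≤ ν ^ 2 * ∑ b ∈ univ.erase a, u b ^ 2 := by
        rw [Finset.mul_sum]
        refine Finset.sum_le_sum fun b hb => ?_
        rw [mul_pow]
        refine mul_le_mul_of_nonneg_right ?_ (sq_nonneg _)
        rw [← sq_abs]
        exact pow_le_pow_left₀ (abs_nonneg _) (subCoh_le A l (Finset.ne_of_mem_erase hb).symm) 2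
      calc _ ≤ ((d : ℝ) - 1) * (ν ^ 2 * ∑ b ∈ univ.erase a, u b ^ 2) :=
            mul_le_mul_of_nonneg_left this hd1
        _ = _ := by ring
    refine (Finset.sum_le_sum fun a _ => key a).trans (le_of_eq ?_)
    rw [← Finset.mul_sum, ← Finset.mul_sum, Finset.sum_sub_distrib]
    simp
    ring
  nlinarith

lemma bnorm_le {σ : Type*} [Fintype σ] {d : ℕ} (z : σ × Fin d → ℝ) (q : σ) :
    e2norm (fun j => z (q, j)) ≤ bnorm2inf z :=
  le_ciSup (f := fun q => e2norm (fun j => z (q, j))) (Set.finite_range _).bddAbove q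

lemma bnorm_nonneg {σ : Type*} [Fintype σ] {d : ℕ} (z : σ × Fin d → ℝ) : 0 ≤ bnorm2inf z :=
  Real.iSup_nonneg fun _ => e2norm_nonneg _

lemma bnorm_pos {σ : Type*} [Fintype σ] {d : ℕ} {z : σ × Fin d → ℝ} (h : z ≠ 0) :
    0 < bnorm2inf z := by
  obtain ⟨⟨q, j⟩, hq⟩ := Function.ne_iff.1 h
  refine (e2norm_pos ?_).trans_le (bnorm_le z q)
  intro h0
  exact hq (congrFun h0 j)

/-- Block `l` of `Aᵀ A_nz w`. -/
def corrBlk {m L d : ℕ} (A : Matrix (Fin m) (Fin L × Fin d) ℝ) (I1 : Finset (Fin L))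
    (w : {l : Fin L // l ∈ I1} × Fin d → ℝ) (l : Fin L) : Fin d → ℝ :=
  ∑ r : {l : Fin L // l ∈ I1}, bgram A l r.1 *ᵥ (fun k => w (r, k))

lemma corr_nz {m L d : ℕ} (A : Matrix (Fin m) (Fin L × Fin d) ℝ) (I1 : Finset (Fin L))
    (w : {l : Fin L // l ∈ I1} × Fin d → ℝ) (l : {l : Fin L // l ∈ I1}) :
    (fun j => (((Anz A I1)ᵀ * Anz A I1) *ᵥ w) (l, j)) = corrBlk A I1 w l.1 := by
  funext j
  simp only [corrBlk, Finset.sum_apply, Matrix.mulVec, dotProduct, Fintype.sum_prod_type]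
  rfl

lemma corr_z {m L d : ℕ} (A : Matrix (Fin m) (Fin L × Fin d) ℝ) (I1 : Finset (Fin L))
    (w : {l : Fin L // l ∈ I1} × Fin d → ℝ) (l : {l : Fin L // l ∉ I1}) :
    (fun j => (((Az A I1)ᵀ * Anz A I1) *ᵥ w) (l, j)) = corrBlk A I1 w l.1 := by
  funext j
  simp only [corrBlk, Finset.sum_apply, Matrix.mulVec, dotProduct, Fintype.sum_prod_type]
  rfl

lemma corr_upper {m L d : ℕ} (hd : 0 < d) (A : Matrix (Fin m) (Fin L × Fin d) ℝ)
    (I1 : Finset (Fin L)) (w : {l : Fin L // l ∈ I1} × Fin d → ℝ) (l : Fin L)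
    (s : Finset {l : Fin L // l ∈ I1}) (hl : ∀ r ∈ s, l ≠ r.1) :
    e2norm (∑ r ∈ s, bgram A l r.1 *ᵥ (fun k => w (r, k)))
      ≤ s.card * d * blockCoh A * bnorm2inf w := by
  refine (e2norm_sum_le _ _).trans ?_
  have : ∀ r ∈ s, e2norm (bgram A l r.1 *ᵥ (fun k => w (r, k)))
      ≤ d * blockCoh A * bnorm2inf w := fun r hr =>
    (bgram_off hd A (hl r hr) _).trans (mul_le_mul_of_nonneg_left (bnorm_le w r)
      (mul_nonneg (by positivity) (blockCoh_nonneg A)))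
  refine (Finset.sum_le_card_nsmul _ _ _ this).trans (le_of_eq ?_)
  simp
  ring

lemma gram_lower {m L d : ℕ} (hd : 0 < d) (A : Matrix (Fin m) (Fin L × Fin d) ℝ)
    (hA : ∀ l j, e2norm (acol A l j) = 1) (I1 : Finset (Fin L))
    (w : {l : Fin L // l ∈ I1} × Fin d → ℝ) :
    (1 - ((d : ℝ) - 1) * subCoh A - ((I1.card : ℝ) - 1) * d * blockCoh A) * bnorm2inf w
      ≤ bnorm2inf (((Anz A I1)ᵀ * Anz A I1) *ᵥ w) := by
  rcases isEmpty_or_nonempty {l : Fin L // l ∈ I1} with hI | hI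
  · simp [bnorm2inf]
  · obtain ⟨l, hl⟩ := exists_eq_ciSup_of_finite
      (f := fun q : {l : Fin L // l ∈ I1} => e2norm (fun j => w (q, j)))
    change e2norm (fun j => w (l, j)) = bnorm2inf w at hl
    refine le_trans ?_ (bnorm_le _ l)
    rw [corr_nz]
    have h1 := bgram_self hd A hA l.1 (fun j => w (l, j))
    have h2 := corr_upper hd A I1 w l.1 (univ.erase l)
      (fun r hr h => (Finset.ne_of_mem_erase hr) (Subtype.ext h.symm))
    have hc : ((univ.erase l).card : ℝ) = (I1.card : ℝ) - 1 := by
      rw [Finset.card_erase_of_mem (Finset.mem_univ l), Finset.card_univ, Fintype.card_coe,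
        Nat.cast_sub (Finset.card_pos.2 ⟨l.1, l.2⟩)]
      simp
    rw [hc] at h2
    have h3 := e2norm_le_add _ _ _ (Finset.add_sum_erase univ
      (fun r : {l : Fin L // l ∈ I1} => bgram A l.1 r.1 *ᵥ (fun k => w (r, k)))
      (Finset.mem_univ l))
    change _ ≤ e2norm (corrBlk A I1 w l.1) + _ at h3
    rw [hl] at h1
    linarith

/-- **Lemma 4 of Eldar–Kuppinger–Bölcskei (eq. (16) of the paper).**  If
`1 - (d-1)ν - (K-1)dμ_B > 0`, then `A_nz` has linearly independent columns and
`‖A_zᵀ (A_nz†)ᵀ‖₂,∞ ≤ K d μ_B / (1 - (d-1)ν - (K-1)dμ_B)`. -/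
theorem stmt5 {m L d K : ℕ}
    (hm : m < L * d) (hd : 0 < d)
    (A : Matrix (Fin m) (Fin L × Fin d) ℝ)
    (hA : ∀ l j, e2norm (acol A l j) = 1)
    (μB ν : ℝ) (hμB : μB = blockCoh A) (hν : ν = subCoh A)
    (I1 : Finset (Fin L)) (hcard : I1.card = K) (hKL : K < L)
    (hcond : 0 < 1 - ((d : ℝ) - 1) * ν - ((K : ℝ) - 1) * d * μB) :
    LinearIndependent ℝ
        (fun c : {l : Fin L // l ∈ I1} × Fin d => fun i => Anz A I1 i c) ∧
      bOpNorm ((Az A I1)ᵀ * (pinvc (Anz A I1))ᵀ) ≤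
        (K : ℝ) * d * μB / (1 - ((d : ℝ) - 1) * ν - ((K : ℝ) - 1) * d * μB) := by
  subst hcard hμB hν
  have hlow := gram_lower hd A hA I1
  set δ := 1 - ((d : ℝ) - 1) * subCoh A - ((I1.card : ℝ) - 1) * d * blockCoh A with hδ
  set X := Anz A I1 with hX
  have hinj : ∀ w, (Xᵀ * X) *ᵥ w = 0 → w = 0 := by
    intro w hw
    by_contra hne
    have h1 := hlow w
    rw [hw] at h1
    have h2 := mul_pos hcond (bnorm_pos hne)
    have h3 : bnorm2inf (0 : {l : Fin L // l ∈ I1} × Fin d → ℝ) = 0 := by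
      have : ∀ q : {l : Fin L // l ∈ I1}, e2norm (fun j : Fin d =>
        (0 : {l : Fin L // l ∈ I1} × Fin d → ℝ) (q, j)) = 0 := fun q => e2norm_zero
      simp only [bnorm2inf, this]
      exact Real.iSup_const_zero
    linarith
  have hunit : IsUnit (Xᵀ * X) := by
    rw [← Matrix.mulVec_injective_iff_isUnit]
    intro u v huv
    refine sub_eq_zero.1 (hinj _ ?_)
    rw [Matrix.mulVec_sub]
    exact sub_eq_zero.2 huv
  have hdet := (Matrix.isUnit_iff_isUnit_det _).1 hunit
  constructor
  · have : LinearIndependent ℝ X.col := by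
      rw [← Matrix.mulVec_injective_iff]
      intro u v huv
      refine sub_eq_zero.1 (hinj _ ?_)
      rw [← Matrix.mulVec_mulVec, Matrix.mulVec_sub]
      change X *ᵥ u = X *ᵥ v at huv
      rw [huv]
      simp
    exact this
  · have hC : 0 ≤ (I1.card : ℝ) * d * blockCoh A :=
      mul_nonneg (by positivity) (blockCoh_nonneg A)
    refine Real.iSup_le ?_ (div_nonneg hC hcond.le)
    rintro ⟨z, hz⟩
    rw [div_le_iff₀ (bnorm_pos hz)]
    set w := (Xᵀ * X)⁻¹ *ᵥ z with hw
    have hzw : (Xᵀ * X) *ᵥ w = z := by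
      rw [hw, Matrix.mulVec_mulVec, Matrix.mul_nonsing_inv _ hdet, Matrix.one_mulVec]
    have hexp : ((Az A I1)ᵀ * (pinvc X)ᵀ) *ᵥ z = ((Az A I1)ᵀ * X) *ᵥ w := by
      rw [hw, Matrix.mulVec_mulVec]
      congr 1
      rw [pinvc, Matrix.transpose_mul, Matrix.transpose_transpose, Matrix.transpose_nonsing_inv,
        Matrix.transpose_mul, Matrix.transpose_transpose, Matrix.mul_assoc]
    have h1 := hlow w
    rw [hzw] at h1
    simp only [hexp]
    have hup : bnorm2inf (((Az A I1)ᵀ * X) *ᵥ w)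
        ≤ (I1.card : ℝ) * d * blockCoh A * bnorm2inf w := by
      refine Real.iSup_le (fun q => ?_) (mul_nonneg hC (bnorm_nonneg _))
      rw [hX, corr_z]
      have := corr_upper hd A I1 w q.1 univ (fun r _ h => q.2 (h ▸ r.2))
      simpa [corrBlk] using this
    refine hup.trans ?_
    rw [div_mul_eq_mul_div, le_div_iff₀ hcond, mul_assoc, mul_comm _ δ]
    exact mul_le_mul_of_nonneg_left h1 hC
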